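/- Let F : ℝ² × ℝ¹⁰ → ℝ be given by F(x,y,λ) = x³ + xy⁴ + λ₁ + λ₂x + λ₃y + λ₄xy + λ₅y² + λ₆xy² + λ₇y³ + λ₈xy³ + λ₉y⁴ + λ₁₀xy⁴. Then there exists ε₀ > 0 such that for every ε with 0 < ε ≤ ε₀ there exists δ > 0 with the following property: writing Σ = {λ ∈ ℝ¹⁰ : ‖λ‖ < δ and there exists p ∈ ℝ² with ‖p‖ ≤ ε, F(p,λ) = 0 and the gradient of F(·,λ) vanishes at p}, there exist 11 points of the set {λ ∈ ℝ¹⁰ : ‖λ‖ < δ} \ Σ lying pairwise in distinct connected components of this set (i.e. the complement of the local discriminant has at least 11 connected components). -/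

import Mathlib

/-!
The deformation is `F = x³ + B(y) x + C(y)` with `B` a quartic close to `y⁴` and `C` of degree at
most `4`. Over the set where `B ≤ 0` the cubic `x ↦ F(x, y)` has the critical points `x = ± m(y)`,
`3 m² = -B`, and the sign of its critical values is that of `± C - 2 m³`. An oval of the curve
`F = 0` is an interval between zeros of `h_s = s C - 2 m³`, inside which `h_s` is negative, such
that `h_{-s}` is negative on the whole closed interval; `s = 1` if it lies to the right of the
long component and `s = -1` if it lies to the left (`Osc`). The sequence of sides along the
`y`-axis is a word in the letters `R` and `L` (`Word`).

That a given word occurs is an open condition on the parameter (`isOpen_word`). For nonsingular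
curves it is also closed: it is then equivalent to the occurrence of possibly degenerate ovals
(`Word.deg`, `WordDeg.word`), a closed condition since for parameters of norm at most
`ε⁴ / 1000` everything happens over `|y| < ε / 2` (`abs_lt_of_Bf`, `isClosed_wordDeg`). So the set
of words that occur is constant on the components of the complement of the discriminant
(`word_congr`).

It remains to find nonsingular curves that distinguish eleven patterns: no ovals, `Rᵏ` and `Lᵏ` for
`k = 1, …, 4`, `LR` and `RL`. Since the quasihomogeneous scaling `scl` contracts the parameters with
`λ₁₀ = 0` to the origin and preserves words, the curves need not be close to `x³ + x y⁴`. The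
ovals of explicit curves are found from the sign of `27 C² + 4 B³`; singular curves are avoided by
adding a small constant to `F`, by Sard's theorem (`Word.exists_shift`). The reflection `x ↦ -x`
exchanges `R` and `L`, so only `∅, R, R², R³, R⁴, LR` have to be exhibited.
-/

/-- The standard versal deformation of the `J₁₀¹` singularity `x³ + xy⁴`. -/
noncomputable def J101Def (p : EuclideanSpace ℝ (Fin 2)) (l : EuclideanSpace ℝ (Fin 10)) : ℝ :=
  (p 0) ^ 3 + p 0 * (p 1) ^ 4 + l 0 + l 1 * p 0 + l 2 * p 1 + l 3 * (p 0 * p 1) + l 4 * (p 1) ^ 2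
    + l 5 * (p 0 * (p 1) ^ 2) + l 6 * (p 1) ^ 3 + l 7 * (p 0 * (p 1) ^ 3)
    + l 8 * (p 1) ^ 4 + l 9 * (p 0 * (p 1) ^ 4)

/-- The local discriminant: parameters `l` with `‖l‖ < δ` such that the corresponding
function has a real critical point `p` with `‖p‖ ≤ ε` and critical value `0`. -/
noncomputable def J101Disc (ε δ : ℝ) : Set (EuclideanSpace ℝ (Fin 10)) :=
  {l | ‖l‖ < δ ∧ ∃ p : EuclideanSpace ℝ (Fin 2), ‖p‖ ≤ ε ∧ J101Def p l = 0 ∧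
    fderiv ℝ (fun q => J101Def q l) p = 0}


namespace J101

open Set Filter Topology

/-- The parameter space of the deformation. -/
abbrev Par := EuclideanSpace ℝ (Fin 10)

/-- The coefficient of `x` in `F = x³ + B(y) x + C(y)`. -/
noncomputable def Bf (l : Par) (y : ℝ) : ℝ :=
  (1 + l 9) * y ^ 4 + l 7 * y ^ 3 + l 5 * y ^ 2 + l 3 * y + l 1

/-- The coefficient of `x⁰` in `F = x³ + B(y) x + C(y)`. -/
noncomputable def Cf (l : Par) (y : ℝ) : ℝ :=
  l 8 * y ^ 4 + l 6 * y ^ 3 + l 4 * y ^ 2 + l 2 * y + l 0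

/-- The derivative of `B`. -/
noncomputable def Bd (l : Par) (y : ℝ) : ℝ :=
  4 * (1 + l 9) * y ^ 3 + 3 * l 7 * y ^ 2 + 2 * l 5 * y + l 3

/-- The derivative of `C`. -/
noncomputable def Cd (l : Par) (y : ℝ) : ℝ :=
  4 * l 8 * y ^ 3 + 3 * l 6 * y ^ 2 + 2 * l 4 * y + l 2

/-- The half-distance between the two critical points of `x ↦ x³ + B(y) x`; it is `0` when
`B(y) ≥ 0`, by the convention for square roots of negative numbers. -/
noncomputable def mf (l : Par) (y : ℝ) : ℝ := √(-(Bf l y) / 3)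

/-- `h_s = s C - 2 m³`. For `s = ±1` and `B(y) ≤ 0`, the number `s · h_s(y)` is the critical value
of `x ↦ F(x, y)` at `x = s m(y)`. -/
noncomputable def hf (s : ℝ) (l : Par) (y : ℝ) : ℝ := s * Cf l y - 2 * mf l y ^ 3

/-- The derivative of `h_s`. -/
noncomputable def hd (s : ℝ) (l : Par) (y : ℝ) : ℝ := s * Cd l y + Bd l y * mf l y

/-- The curve `F(·, l) = 0` has a real singular point, anywhere in the plane. -/
def Sing (l : Par) : Prop :=
  ∃ x y : ℝ, x ^ 3 + Bf l y * x + Cf l y = 0 ∧ 3 * x ^ 2 + Bf l y = 0 ∧ Bd l y * x + Cd l y = 0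

/-- `a < z < b` are witnesses for an oval of the curve on the side `s` of the long component:
the oval projects to an interval inside `(a, b)` whose interior contains `z`. -/
def Osc (s : ℝ) (l : Par) (a z b : ℝ) : Prop :=
  a < z ∧ z < b ∧ 0 < hf s l a ∧ hf s l z < 0 ∧ 0 < hf s l b ∧ ∀ y ∈ Icc a b, hf (-s) l y < 0

/-- The curve has ovals on the sides `σ 0, σ 1, …`, in this order along the `y`-axis (there may be
further ovals). -/
def Word {k : ℕ} (σ : Fin k → ℝ) (l : Par) : Prop :=
  ∃ a z b : Fin k → ℝ, (∀ i, Osc (σ i) l (a i) (z i) (b i)) ∧ ∀ i j, i < j → b i ≤ a j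

/-- A possibly degenerate oval over `[α, β]`: a closed condition on all the data. The point `ξ` is
kept so that an interval collapsed to a point is seen to carry a critical point of `h_s`. -/
def Deg (s : ℝ) (l : Par) (α ξ β : ℝ) : Prop :=
  α ≤ ξ ∧ ξ ≤ β ∧ hf s l α = 0 ∧ hf s l β = 0 ∧ hd s l ξ = 0 ∧
    ∀ t ∈ Icc (0 : ℝ) 1, Bf l (α + t * (β - α)) ≤ 0 ∧ hf s l (α + t * (β - α)) ≤ 0 ∧
      hf (-s) l (α + t * (β - α)) ≤ 0

/-- The closed counterpart of `Word`, with degenerate ovals allowed. -/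
def WordDeg {k : ℕ} (σ : Fin k → ℝ) (l : Par) : Prop :=
  ∃ α ξ β : Fin k → ℝ, (∀ i, Deg (σ i) l (α i) (ξ i) (β i)) ∧ ∀ i j, i < j → β i ≤ α j

/-! ### Regularity of the functions `h_s` -/

lemma hasDerivAt_sqrt_cube (u : ℝ) : HasDerivAt (fun u => √u ^ 3) (3 / 2 * √u) u := by
  rcases eq_or_ne u 0 with rfl | hu
  · rw [hasDerivAt_iff_tendsto_slope]
    have h : Tendsto (fun u : ℝ => √u) (𝓝[≠] 0) (𝓝 (√0)) :=
      (Real.continuous_sqrt.tendsto 0).mono_left nhdsWithin_le_nhds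
    simp only [Real.sqrt_zero, mul_zero] at h ⊢
    refine h.congr' ?_
    filter_upwards [self_mem_nhdsWithin] with v hv
    have hv : v ≠ 0 := hv
    rw [slope_def_field]
    rcases le_total v 0 with h0 | h0
    · simp [Real.sqrt_eq_zero_of_nonpos h0]
    · have := Real.sq_sqrt h0
      field_simp
      simp only [Real.sqrt_zero]
      linear_combination (-√v) * this
  · have h := (Real.hasDerivAt_sqrt hu).pow 3
    refine h.congr_deriv ?_
    rcases le_total u 0 with h0 | h0
    · simp [Real.sqrt_eq_zero_of_nonpos h0]
    · have : √u ≠ 0 := by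
        rw [Real.sqrt_ne_zero']; exact lt_of_le_of_ne h0 hu.symm
      field_simp
      norm_num
      ring

lemma hasDerivAt_Bf (l : Par) (y : ℝ) : HasDerivAt (Bf l) (Bd l y) y := by
  have h := ((((((hasDerivAt_id y).pow 4).const_mul (1 + l 9)).add
    (((hasDerivAt_id y).pow 3).const_mul (l 7))).add
    (((hasDerivAt_id y).pow 2).const_mul (l 5))).add
    ((hasDerivAt_id y).const_mul (l 3))).add_const (l 1)
  refine h.congr_deriv ?_
  simp [Bd]; ring

lemma hasDerivAt_Cf (l : Par) (y : ℝ) : HasDerivAt (Cf l) (Cd l y) y := by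
  have h := ((((((hasDerivAt_id y).pow 4).const_mul (l 8)).add
    (((hasDerivAt_id y).pow 3).const_mul (l 6))).add
    (((hasDerivAt_id y).pow 2).const_mul (l 4))).add
    ((hasDerivAt_id y).const_mul (l 2))).add_const (l 0)
  refine h.congr_deriv ?_
  simp [Cd]; ring

lemma hasDerivAt_hf (s : ℝ) (l : Par) (y : ℝ) : HasDerivAt (hf s l) (hd s l y) y := by
  have h1 : HasDerivAt (fun y => -(Bf l y) / 3) (-(Bd l y) / 3) y :=
    (hasDerivAt_Bf l y).neg.div_const 3
  have h2 := (hasDerivAt_sqrt_cube (-(Bf l y) / 3)).comp y h1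
  have h3 := ((hasDerivAt_Cf l y).const_mul s).sub (h2.const_mul 2)
  refine h3.congr_deriv ?_
  simp only [hd, mf]; ring

lemma continuous_Bf : Continuous fun p : Par × ℝ => Bf p.1 p.2 := by
  unfold Bf; fun_prop

lemma continuous_hf (s : ℝ) : Continuous fun p : Par × ℝ => hf s p.1 p.2 := by
  unfold hf mf Bf Cf; fun_prop

lemma continuous_hd (s : ℝ) : Continuous fun p : Par × ℝ => hd s p.1 p.2 := by
  unfold hd mf Bf Bd Cd; fun_prop

lemma continuous_hf_right (s : ℝ) (l : Par) : Continuous (hf s l) :=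
  (continuous_hf s).comp (by fun_prop : Continuous fun y : ℝ => (l, y))

lemma mf_nonneg (l : Par) (y : ℝ) : 0 ≤ mf l y := Real.sqrt_nonneg _

lemma mf_sq {l : Par} {y : ℝ} (h : Bf l y ≤ 0) : 3 * mf l y ^ 2 = -Bf l y := by
  unfold mf
  rw [Real.sq_sqrt (by linarith)]; ring

lemma hf_add_hf_neg (s : ℝ) (l : Par) (y : ℝ) : hf s l y + hf (-s) l y = -4 * mf l y ^ 3 := by
  unfold hf; ring

/-- Where `|C| < 2 m³`, or at an end of such an interval, `B` is negative. -/
lemma Bf_neg_of_hf {s : ℝ} {l : Par} {y : ℝ} (h1 : hf s l y ≤ 0) (h2 : hf (-s) l y < 0) :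
    Bf l y < 0 := by
  by_contra hB
  have hm : mf l y = 0 := Real.sqrt_eq_zero_of_nonpos (by linarith)
  have := hf_add_hf_neg s l y
  rw [hm] at this
  norm_num at this
  linarith

/-- A double zero of `h_s` over `B ≤ 0` is a singular point of the curve. -/
lemma sing_of_hf {s : ℝ} (hs : s = 1 ∨ s = -1) {l : Par} {y : ℝ} (hB : Bf l y ≤ 0)
    (h0 : hf s l y = 0) (h1 : hd s l y = 0) : Sing l := by
  have hm := mf_sq hB
  refine ⟨s * mf l y, y, ?_, ?_, ?_⟩ <;> unfold hf at h0 <;> unfold hd at h1 <;>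
    rcases hs with rfl | rfl
  · linear_combination h0 + mf l y * hm
  · linear_combination -h0 - mf l y * hm
  · linear_combination hm
  · linear_combination hm
  · linear_combination h1
  · linear_combination -h1

/-! ### The presence of a word is an open condition -/

lemma isOpen_osc (s a z b : ℝ) : IsOpen {l : Par | Osc s l a z b} := by
  have hc : ∀ (s y : ℝ), Continuous fun l : Par => hf s l y := fun s y =>
    (continuous_hf s).comp (by fun_prop : Continuous fun l : Par => (l, y))
  have hK : IsOpen {l : Par | ∀ y ∈ Icc a b, hf (-s) l y < 0} := by
    rw [isOpen_iff_eventually]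
    intro l hl
    refine isCompact_Icc.eventually_forall_of_forall_eventually fun y hy => ?_
    exact (continuous_hf (-s)).continuousAt.eventually (Iio_mem_nhds (hl y hy))
  unfold Osc
  exact isOpen_const.and (isOpen_const.and ((isOpen_lt continuous_const (hc s a)).and
    ((isOpen_lt (hc s z) continuous_const).and ((isOpen_lt continuous_const (hc s b)).and hK))))

lemma isOpen_word {k : ℕ} (σ : Fin k → ℝ) : IsOpen {l : Par | Word σ l} := by
  have : {l : Par | Word σ l} = ⋃ (a : Fin k → ℝ) (z : Fin k → ℝ) (b : Fin k → ℝ)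
      (_ : ∀ i j, i < j → b i ≤ a j), ⋂ i, {l : Par | Osc (σ i) l (a i) (z i) (b i)} := by
    ext l
    simp only [Word, mem_ofPred_eq, mem_iUnion, mem_iInter, exists_prop]
    exact ⟨fun ⟨a, z, b, h, h'⟩ => ⟨a, z, b, h', h⟩, fun ⟨a, z, b, h', h⟩ => ⟨a, z, b, h, h'⟩⟩
  rw [this]
  refine isOpen_iUnion fun a => isOpen_iUnion fun z => isOpen_iUnion fun b =>
    isOpen_iUnion fun _ => isOpen_iInter_of_finite fun i => isOpen_osc _ _ _ _

/-! ### The presence of a degenerate word is a closed condition -/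

lemma isClosed_deg (s : ℝ) : IsClosed {p : Par × ℝ × ℝ × ℝ | Deg s p.1 p.2.1 p.2.2.1 p.2.2.2} := by
  have hh : ∀ (s : ℝ) (f : Par × ℝ × ℝ × ℝ → ℝ), Continuous f →
      Continuous fun p : Par × ℝ × ℝ × ℝ => hf s p.1 (f p) := fun s f hf' =>
    (continuous_hf s).comp (continuous_fst.prodMk hf')
  have hD : ∀ (s : ℝ) (f : Par × ℝ × ℝ × ℝ → ℝ), Continuous f →
      Continuous fun p : Par × ℝ × ℝ × ℝ => hd s p.1 (f p) := fun s f hf' =>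
    (continuous_hd s).comp (continuous_fst.prodMk hf')
  have hB : ∀ (f : Par × ℝ × ℝ × ℝ → ℝ), Continuous f →
      Continuous fun p : Par × ℝ × ℝ × ℝ => Bf p.1 (f p) := fun f hf' =>
    continuous_Bf.comp (continuous_fst.prodMk hf')
  unfold Deg
  refine (isClosed_le (by fun_prop) (by fun_prop)).and
    ((isClosed_le (by fun_prop) (by fun_prop)).and
    ((isClosed_eq (hh _ _ (by fun_prop)) continuous_const).and
    ((isClosed_eq (hh _ _ (by fun_prop)) continuous_const).and
    ((isClosed_eq (hD _ _ (by fun_prop)) continuous_const).and ?_))))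
  simp only [ofPred_forall]
  refine isClosed_iInter fun t => isClosed_iInter fun _ => ?_
  exact (isClosed_le (hB _ (by fun_prop)) continuous_const).and
    ((isClosed_le (hh _ _ (by fun_prop)) continuous_const).and
    (isClosed_le (hh _ _ (by fun_prop)) continuous_const))

lemma Deg.Bf_left {s : ℝ} {l : Par} {α ξ β : ℝ} (h : Deg s l α ξ β) : Bf l α ≤ 0 := by
  simpa using (h.2.2.2.2.2 0 (by simp)).1

lemma Deg.Bf_right {s : ℝ} {l : Par} {α ξ β : ℝ} (h : Deg s l α ξ β) : Bf l β ≤ 0 := by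
  simpa using (h.2.2.2.2.2 1 (by simp)).1

/-- The conditions of `Deg` on the segment, in terms of its points. -/
lemma Deg.mem {s : ℝ} {l : Par} {α ξ β : ℝ} (h : Deg s l α ξ β) {y : ℝ} (hy : y ∈ Icc α β) :
    Bf l y ≤ 0 ∧ hf s l y ≤ 0 ∧ hf (-s) l y ≤ 0 := by
  rcases eq_or_lt_of_le (h.1.trans h.2.1) with hab | hab
  · have : y = α := le_antisymm (hab ▸ hy.2) hy.1
    subst this
    simpa using h.2.2.2.2.2 0 (by simp)
  · have h0 : 0 < β - α := sub_pos.2 hab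
    have h1 := h.2.2.2.2.2 ((y - α) / (β - α)) ⟨div_nonneg (sub_nonneg.2 hy.1) h0.le,
      (div_le_one h0).2 (by linarith [hy.2])⟩
    rwa [div_mul_cancel₀ _ h0.ne', add_sub_cancel] at h1

lemma abs_coord_le (l : Par) (i : Fin 10) : |l i| ≤ ‖l‖ := by
  simpa using PiLp.norm_apply_le l i

lemma abs_lt_of_Bf {ε : ℝ} (h0 : 0 < ε) (h1 : ε ≤ 1) {l : Par} (hl : ‖l‖ ≤ ε ^ 4 / 1000) {y : ℝ}
    (hB : Bf l y ≤ 0) : |y| < ε / 2 := by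
  by_contra! hy
  have hc : ∀ i, |l i| ≤ ε ^ 4 / 1000 := fun i => (abs_coord_le l i).trans hl
  set δ := ε ^ 4 / 1000 with hδ
  have hδ0 : 0 < δ := by positivity
  have hδ1 : δ ≤ 1 / 1000 := by
    have : ε ^ 4 ≤ 1 := pow_le_one₀ h0.le h1
    linarith
  have hterm : ∀ (i : Fin 10) (n : ℕ), -(δ * |y| ^ n) ≤ l i * y ^ n := fun i n => by
    have h2 : |l i * y ^ n| ≤ δ * |y| ^ n := by
      rw [abs_mul, abs_pow]; gcongr; exact hc i
    linarith [neg_abs_le (l i * y ^ n)]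
  have e9 := hterm 9 4
  have e7 := hterm 7 3
  have e5 := hterm 5 2
  have e3 := hterm 3 1
  have e1 := hterm 1 0
  have hy4 : y ^ 4 = |y| ^ 4 := by rw [← abs_pow, abs_of_nonneg (by positivity)]
  unfold Bf at hB
  set a := |y|
  have key : a ^ 4 ≤ δ * (a ^ 4 + a ^ 3 + a ^ 2 + a + 1) := by
    simp only [pow_one, pow_zero] at e3 e1
    nlinarith
  have ha : 0 < a := by linarith
  rcases le_total a 1 with h | h
  · have h4 : (ε / 2) ^ 4 ≤ a ^ 4 := by gcongr
    have : a ^ 4 + a ^ 3 + a ^ 2 + a + 1 ≤ 5 := by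
      have := pow_le_one₀ ha.le h (n := 4)
      have := pow_le_one₀ ha.le h (n := 3)
      have := pow_le_one₀ ha.le h (n := 2)
      linarith
    have h5 : δ * (a ^ 4 + a ^ 3 + a ^ 2 + a + 1) ≤ δ * 5 := by gcongr
    have : 0 < ε ^ 4 := by positivity
    have h6 : (ε / 2) ^ 4 = ε ^ 4 / 16 := by ring
    linarith
  · have h1' : 1 ≤ a ^ 4 := one_le_pow₀ h
    have h3 : a ^ 3 ≤ a ^ 4 := pow_le_pow_right₀ h (by norm_num)
    have h2 : a ^ 2 ≤ a ^ 4 := pow_le_pow_right₀ h (by norm_num)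
    have h1 : a ≤ a ^ 4 := le_self_pow₀ h (by norm_num)
    have : δ * (a ^ 4 + a ^ 3 + a ^ 2 + a + 1) ≤ 1 / 1000 * (5 * a ^ 4) := by
      gcongr; linarith
    linarith

lemma isClosed_wordDeg {k : ℕ} (σ : Fin k → ℝ) {ε : ℝ} (h0 : 0 < ε) (h1 : ε ≤ 1) :
    IsClosed {l : Par | ‖l‖ ≤ ε ^ 4 / 1000 ∧ WordDeg σ l} := by
  let I : Set (Fin k → ℝ) := Icc (fun _ => -1) (fun _ => 1)
  have hI : IsCompact I := isCompact_Icc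
  let Z : Set (Par × (Fin k → ℝ) × (Fin k → ℝ) × (Fin k → ℝ)) :=
    {p | (∀ i, Deg (σ i) p.1 (p.2.1 i) (p.2.2.1 i) (p.2.2.2 i)) ∧
      ∀ i j, i < j → p.2.2.2 i ≤ p.2.1 j}
  have hZ : IsClosed Z := by
    refine IsClosed.and ?_ ?_
    · simp only [ofPred_forall]
      refine isClosed_iInter fun i => ?_
      exact (isClosed_deg (σ i)).preimage (by fun_prop :
        Continuous fun p : Par × (Fin k → ℝ) × (Fin k → ℝ) × (Fin k → ℝ) =>
          (p.1, p.2.1 i, p.2.2.1 i, p.2.2.2 i))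
    · simp only [ofPred_forall]
      exact isClosed_iInter fun i => isClosed_iInter fun j => isClosed_iInter fun _ =>
        isClosed_le (by fun_prop) (by fun_prop)
  have hK : IsCompact ((Metric.closedBall (0 : Par) (ε ^ 4 / 1000) ×ˢ I ×ˢ I ×ˢ I) ∩ Z) :=
    ((isCompact_closedBall _ _).prod (hI.prod (hI.prod hI))).inter_right hZ
  have himg := (hK.image continuous_fst).isClosed
  convert himg using 1
  ext l
  constructor
  · rintro ⟨hl, α, ξ, β, h, h'⟩
    refine ⟨(l, α, ξ, β), ⟨⟨by simpa using hl, ?_⟩, h, h'⟩, rfl⟩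
    have ha : ∀ i, -1 ≤ α i := fun i => by
      have := abs_lt.1 (abs_lt_of_Bf h0 h1 hl (h i).Bf_left); linarith
    have hb : ∀ i, β i ≤ 1 := fun i => by
      have := abs_lt.1 (abs_lt_of_Bf h0 h1 hl (h i).Bf_right); linarith
    have h1 : ∀ i, α i ≤ ξ i := fun i => (h i).1
    have h2 : ∀ i, ξ i ≤ β i := fun i => (h i).2.1
    exact ⟨⟨ha, fun i => (h1 i).trans ((h2 i).trans (hb i))⟩,
      ⟨fun i => (ha i).trans (h1 i), fun i => (h2 i).trans (hb i)⟩,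
      ⟨fun i => (ha i).trans ((h1 i).trans (h2 i)), hb⟩⟩
  · rintro ⟨⟨l', α, ξ, β⟩, ⟨⟨hl, -⟩, h, h'⟩, rfl⟩
    exact ⟨by simpa using hl, α, ξ, β, h, h'⟩

/-! ### Comparison of words and degenerate words -/

lemma Osc.deg {s : ℝ} {l : Par} {a z b : ℝ} (h : Osc s l a z b) :
    ∃ α ξ β, Deg s l α ξ β ∧ a ≤ α ∧ β ≤ b := by
  obtain ⟨haz, hzb, ha, hz, hb, hneg⟩ := h
  have hc := continuous_hf_right s l
  have hcl : IsClosed {y | 0 ≤ hf s l y} := isClosed_le continuous_const hc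
  obtain ⟨α, ⟨hα, hα0⟩, hαmax⟩ := ((isCompact_Icc (a := a) (b := z)).inter_right hcl).exists_isGreatest
    ⟨a, ⟨le_rfl, haz.le⟩, ha.le⟩
  obtain ⟨β, ⟨hβ, hβ0⟩, hβmin⟩ := ((isCompact_Icc (a := z) (b := b)).inter_right hcl).exists_isLeast
    ⟨b, ⟨hzb.le, le_rfl⟩, hb.le⟩
  have hα0 : 0 ≤ hf s l α := hα0
  have hβ0 : 0 ≤ hf s l β := hβ0
  have hαz : α < z := lt_of_le_of_ne hα.2 (by rintro rfl; linarith)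
  have hzβ : z < β := lt_of_le_of_ne hβ.1 (by rintro rfl; linarith)
  have hin : ∀ y ∈ Ioo α β, hf s l y < 0 := by
    intro y hy
    by_contra! hy0
    rcases le_total y z with h | h
    · exact absurd (hαmax ⟨⟨hα.1.trans hy.1.le, h⟩, hy0⟩) (not_le.2 hy.1)
    · exact absurd (hβmin ⟨⟨h, hy.2.le.trans hβ.2⟩, hy0⟩) (not_le.2 hy.2)
  have hαβ := hαz.trans hzβ
  have hall : ∀ y ∈ Icc α β, hf s l y ≤ 0 := by
    rw [← closure_Ioo hαβ.ne]
    exact closure_minimal (fun y hy => (hin y hy).le) (isClosed_le hc continuous_const)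
  have eα : hf s l α = 0 := le_antisymm (hall α ⟨le_rfl, hαβ.le⟩) hα0
  have eβ : hf s l β = 0 := le_antisymm (hall β ⟨hαβ.le, le_rfl⟩) hβ0
  obtain ⟨ξ, hξ, hξ0⟩ := exists_hasDerivAt_eq_zero hαβ hc.continuousOn (eα.trans eβ.symm)
    (fun y _ => hasDerivAt_hf s l y)
  refine ⟨α, ξ, β, ⟨hξ.1.le, hξ.2.le, eα, eβ, hξ0, fun t ht => ?_⟩, hα.1, hβ.2⟩
  have hy : α + t * (β - α) ∈ Icc α β := by
    have := ht.1; have := ht.2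
    constructor <;> nlinarith
  have h1 := hall _ hy
  have h2 := hneg _ ⟨hα.1.trans hy.1, hy.2.trans hβ.2⟩
  exact ⟨(Bf_neg_of_hf h1 h2).le, h1, h2.le⟩

lemma Word.deg {k : ℕ} {σ : Fin k → ℝ} {l : Par} (h : Word σ l) : WordDeg σ l := by
  obtain ⟨a, z, b, h, hab⟩ := h
  choose α ξ β hd h1 h2 using fun i => (h i).deg
  exact ⟨α, ξ, β, hd, fun i j hij => (h2 i).trans ((hab i j hij).trans (h1 j))⟩

lemma hf_nonpos_right {s : ℝ} {l : Par} {α β : ℝ} (hαβ : α < β) (h0 : hf s l α = 0)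
    (h : ∀ y ∈ Icc α β, hf s l y ≤ 0) : hd s l α ≤ 0 := by
  have h1 := ((hasDerivAt_hf s l α).hasDerivWithinAt (s := Ioi α))
  rw [hasDerivWithinAt_iff_tendsto_slope' (by simp)] at h1
  refine le_of_tendsto h1 ?_
  filter_upwards [Ioo_mem_nhdsGT hαβ] with y hy
  rw [slope_def_field, h0, sub_zero]
  exact div_nonpos_of_nonpos_of_nonneg (h y ⟨hy.1.le, hy.2.le⟩) (sub_nonneg.2 hy.1.le)

lemma hf_nonpos_left {s : ℝ} {l : Par} {α β : ℝ} (hαβ : α < β) (h0 : hf s l β = 0)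
    (h : ∀ y ∈ Icc α β, hf s l y ≤ 0) : 0 ≤ hd s l β := by
  have h1 := ((hasDerivAt_hf s l β).hasDerivWithinAt (s := Iio β))
  rw [hasDerivWithinAt_iff_tendsto_slope' (by simp)] at h1
  refine ge_of_tendsto h1 ?_
  filter_upwards [Ioo_mem_nhdsLT hαβ] with y hy
  rw [slope_def_field, h0, sub_zero]
  exact div_nonneg_of_nonpos (h y ⟨hy.1.le, hy.2.le⟩) (sub_nonpos.2 hy.2.le)

/-- On a nonsingular curve a degenerate oval is a genuine one: `h_s` has nonzero derivatives of the
right signs at the ends, and `|C|` does not reach `2 m³` from the other side. -/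
lemma Deg.strict {s : ℝ} (hs : s = 1 ∨ s = -1) {l : Par} (hl : ¬ Sing l) {α ξ β : ℝ}
    (h : Deg s l α ξ β) :
    α < β ∧ hd s l α < 0 ∧ 0 < hd s l β ∧ (∀ y ∈ Ioo α β, hf s l y < 0) ∧
      ∀ y ∈ Icc α β, hf (-s) l y < 0 := by
  have hs' : -s = 1 ∨ -s = -1 := by rcases hs with rfl | rfl <;> simp
  have hm := fun y hy => h.mem (y := y) hy
  obtain ⟨h1, h2, hα, hβ, hξ, -⟩ := id h
  have hab : α < β := by
    refine lt_of_le_of_ne (h1.trans h2) ?_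
    rintro rfl
    have : ξ = α := le_antisymm h2 h1
    subst this
    exact hl (sing_of_hf hs h.Bf_left hα hξ)
  have dα : hd s l α < 0 := lt_of_le_of_ne (hf_nonpos_right hab hα fun y hy => (hm y hy).2.1)
    fun e => hl (sing_of_hf hs h.Bf_left hα e)
  have dβ : 0 < hd s l β := lt_of_le_of_ne (hf_nonpos_left hab hβ fun y hy => (hm y hy).2.1)
    fun e => hl (sing_of_hf hs h.Bf_right hβ e.symm)
  have hinner : ∀ y ∈ Ioo α β, hf s l y < 0 := by
    intro y hy
    have hy' : y ∈ Icc α β := ⟨hy.1.le, hy.2.le⟩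
    refine lt_of_le_of_ne (hm y hy').2.1 fun e => ?_
    refine hl (sing_of_hf hs (hm y hy').1 e (le_antisymm ?_ ?_))
    · exact hf_nonpos_right hy.2 e fun v hv => (hm v ⟨hy'.1.trans hv.1, hv.2⟩).2.1
    · exact hf_nonpos_left hy.1 e fun v hv => (hm v ⟨hv.1, hv.2.trans hy'.2⟩).2.1
  refine ⟨hab, dα, dβ, hinner, fun y hy => lt_of_le_of_ne (hm y hy).2.2 fun e => ?_⟩
  have hBy := (hm y hy).1
  -- at an end where both `h_s` and `h_{-s}` vanish, `m = 0` and the two derivatives are opposite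
  have hm0 : hf s l y = 0 → hd (-s) l y = - hd s l y := fun e' => by
    have h3 := hf_add_hf_neg s l y
    rw [e, e'] at h3
    have : mf l y = 0 := by
      have : mf l y ^ 3 = 0 := by linarith
      simpa using this
    simp only [hd, this]; ring
  rcases eq_or_lt_of_le hy.1 with rfl | hy1
  · have h4 := hf_nonpos_right hab e fun y hy => (hm y hy).2.2
    have := hm0 hα
    linarith
  rcases eq_or_lt_of_le hy.2 with rfl | hy2
  · have h4 := hf_nonpos_left hab e fun y hy => (hm y hy).2.2
    have := hm0 hβ
    linarith
  refine hl (sing_of_hf hs' hBy e (le_antisymm ?_ ?_))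
  · exact hf_nonpos_right hy2 e fun v hv => (hm v ⟨hy.1.trans hv.1, hv.2⟩).2.2
  · exact hf_nonpos_left hy1 e fun v hv => (hm v ⟨hv.1, hv.2.trans hy.2⟩).2.2

lemma hf_pos_left {s : ℝ} {l : Par} {α : ℝ} (h0 : hf s l α = 0) (h : hd s l α < 0) :
    ∀ᶠ r in 𝓝[>] (0 : ℝ), 0 < hf s l (α - r) := by
  have h1 := (hasDerivAt_hf s l α).hasDerivWithinAt (s := Iio α)
  rw [hasDerivWithinAt_iff_tendsto_slope' (by simp)] at h1
  have h2 : ∀ᶠ y in 𝓝[<] α, 0 < hf s l y := by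
    filter_upwards [h1.eventually (Iio_mem_nhds h), self_mem_nhdsWithin] with y hy hyα
    have hyα : y < α := hyα
    have hy : slope (hf s l) α y < 0 := hy
    rw [slope_def_field, h0, sub_zero] at hy
    by_contra! h3
    exact absurd hy (not_lt.2 (div_nonneg_of_nonpos h3 (sub_nonpos.2 hyα.le)))
  have h3 : Tendsto (fun r : ℝ => α - r) (𝓝[>] 0) (𝓝[<] α) := by
    refine tendsto_nhdsWithin_iff.2 ⟨?_, ?_⟩
    · have : Tendsto (fun r : ℝ => α - r) (𝓝 0) (𝓝 (α - 0)) := by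
        exact (continuous_const.sub continuous_id).tendsto 0
      rw [sub_zero] at this
      exact this.mono_left nhdsWithin_le_nhds
    · filter_upwards [self_mem_nhdsWithin] with r hr
      have : 0 < r := hr
      simpa using this
  exact h3.eventually h2

lemma hf_pos_right {s : ℝ} {l : Par} {α : ℝ} (h0 : hf s l α = 0) (h : 0 < hd s l α) :
    ∀ᶠ r in 𝓝[>] (0 : ℝ), 0 < hf s l (α + r) := by
  have h1 := (hasDerivAt_hf s l α).hasDerivWithinAt (s := Ioi α)
  rw [hasDerivWithinAt_iff_tendsto_slope' (by simp)] at h1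
  have h2 : ∀ᶠ y in 𝓝[>] α, 0 < hf s l y := by
    filter_upwards [h1.eventually (Ioi_mem_nhds h), self_mem_nhdsWithin] with y hy hyα
    have hyα : α < y := hyα
    have hy : 0 < slope (hf s l) α y := hy
    rw [slope_def_field, h0, sub_zero] at hy
    by_contra! h3
    exact absurd hy (not_lt.2 (div_nonpos_of_nonpos_of_nonneg h3 (sub_nonneg.2 hyα.le)))
  have h3 : Tendsto (fun r : ℝ => α + r) (𝓝[>] 0) (𝓝[>] α) := by
    refine tendsto_nhdsWithin_iff.2 ⟨?_, ?_⟩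
    · have : Tendsto (fun r : ℝ => α + r) (𝓝 0) (𝓝 (α + 0)) := by
        exact (continuous_const.add continuous_id).tendsto 0
      rw [add_zero] at this
      exact this.mono_left nhdsWithin_le_nhds
    · filter_upwards [self_mem_nhdsWithin] with r hr
      have : 0 < r := hr
      simpa using this
  exact h3.eventually h2

lemma WordDeg.word {k : ℕ} {σ : Fin k → ℝ} (hσ : ∀ i, σ i = 1 ∨ σ i = -1) {l : Par}
    (hl : ¬ Sing l) (h : WordDeg σ l) : Word σ l := by
  obtain ⟨α, ξ, β, hD, hord⟩ := h
  choose hab dα dβ hinner hneg using fun i => (hD i).strict (hσ i) hl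
  have eα : ∀ i, hf (σ i) l (α i) = 0 := fun i => (hD i).2.2.1
  have eβ : ∀ i, hf (σ i) l (β i) = 0 := fun i => (hD i).2.2.2.1
  have hlt : ∀ i j, i < j → β i < α j := by
    intro i j hij
    refine lt_of_le_of_ne (hord i j hij) fun e => ?_
    have h1 := dβ i
    have h2 := hneg i (β i) ⟨(hab i).le, le_rfl⟩
    have h3 := dα j
    have h4 := eα j
    rw [e] at h1 h2
    by_cases hij' : σ i = σ j
    · rw [hij'] at h1; linarith
    · have : -σ i = σ j := by
        rcases hσ i with h | h <;> rcases hσ j with h' | h' <;> simp_all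
      rw [this] at h2; linarith
  have hev : ∀ᶠ r in 𝓝[>] (0 : ℝ), (∀ i, 0 < hf (σ i) l (α i - r) ∧ 0 < hf (σ i) l (β i + r)) ∧
      ∀ i j, i < j → β i + r ≤ α j - r := by
    refine (eventually_all.2 fun i => (hf_pos_left (eα i) (dα i)).and
      (hf_pos_right (eβ i) (dβ i))).and ?_
    refine eventually_all.2 fun i => eventually_all.2 fun j => ?_
    by_cases hij : i < j
    · have h0 : 0 < (α j - β i) / 2 := by linarith [hlt i j hij]
      filter_upwards [Ioo_mem_nhdsGT h0] with r hr _
      linarith [hr.2]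
    · exact Eventually.of_forall fun _ h => absurd h hij
  obtain ⟨u, hu, hsub⟩ := mem_nhdsGT_iff_exists_Ioo_subset.1 hev
  have hu : 0 < u := hu
  have hr : ∀ r, 0 < r → r ≤ u / 2 → (∀ i, 0 < hf (σ i) l (α i - r) ∧ 0 < hf (σ i) l (β i + r)) ∧
      ∀ i j, i < j → β i + r ≤ α j - r := fun r h1 h2 => hsub ⟨h1, by linarith⟩
  have hneg' : ∀ i y, 0 < hf (σ i) l y → hf (-σ i) l y < 0 := fun i y hy => by
    have h1 := hf_add_hf_neg (σ i) l y
    have h2 : 0 ≤ mf l y ^ 3 := pow_nonneg (mf_nonneg l y) 3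
    linarith
  refine ⟨fun i => α i - u / 2, fun i => (α i + β i) / 2, fun i => β i + u / 2, fun i =>
    ⟨?_, ?_, ((hr (u / 2) (by linarith) le_rfl).1 i).1, ?_,
      ((hr (u / 2) (by linarith) le_rfl).1 i).2, ?_⟩, (hr (u / 2) (by linarith) le_rfl).2⟩
  · have := hab i; linarith
  · have := hab i; linarith
  · have := hab i
    exact hinner i _ ⟨by linarith, by linarith⟩
  · intro y hy
    rcases lt_or_ge y (α i) with h1 | h1
    · refine hneg' i y ?_
      have := ((hr (α i - y) (by linarith) (by linarith [hy.1])).1 i).1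
      rwa [sub_sub_cancel] at this
    rcases lt_or_ge (β i) y with h2 | h2
    · refine hneg' i y ?_
      have := ((hr (y - β i) (by linarith) (by linarith [hy.2])).1 i).2
      rwa [add_sub_cancel] at this
    exact hneg i y ⟨h1, h2⟩

/-- The presence of a word is constant on each connected component of the set of small parameters
with nonsingular curve: there it is both open and closed. -/
lemma word_congr {ε : ℝ} (h0 : 0 < ε) (h1 : ε ≤ 1) {S : Set Par}
    (hS : ∀ l ∈ S, ‖l‖ < ε ^ 4 / 1000 ∧ ¬ Sing l) {l l' : Par} (hl : l ∈ S) (hl' : l' ∈ S)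
    (hcc : connectedComponentIn S l = connectedComponentIn S l') {k : ℕ} {σ : Fin k → ℝ}
    (hσ : ∀ i, σ i = 1 ∨ σ i = -1) (hw : Word σ l) : Word σ l' := by
  by_contra hw'
  have hpre : IsPreconnected (connectedComponentIn S l) := isPreconnected_connectedComponentIn
  have hsub : connectedComponentIn S l ⊆ S := connectedComponentIn_subset S l
  obtain ⟨x, hx, hxU, hxV⟩ := hpre {l | Word σ l} {l | ‖l‖ ≤ ε ^ 4 / 1000 ∧ WordDeg σ l}ᶜ
    (isOpen_word σ) (isClosed_wordDeg σ h0 h1).isOpen_compl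
    (fun x hx => by
      by_cases hd : WordDeg σ x
      · exact Or.inl (hd.word hσ (hS x (hsub hx)).2)
      · exact Or.inr fun h => hd h.2)
    ⟨l, mem_connectedComponentIn hl, hw⟩
    ⟨l', hcc ▸ mem_connectedComponentIn hl', fun h => hw' (h.2.word hσ (hS l' hl').2)⟩
  exact hxV ⟨(hS x (hsub hx)).1.le, Word.deg hxU⟩

lemma Word.comp {k n : ℕ} {σ : Fin n → ℝ} {l : Par} (h : Word σ l) {e : Fin k → Fin n}
    (he : StrictMono e) : Word (σ ∘ e) l := by
  obtain ⟨a, z, b, h, hab⟩ := h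
  exact ⟨a ∘ e, z ∘ e, b ∘ e, fun i => h (e i), fun i j hij => hab _ _ (he hij)⟩

/-! ### Quasihomogeneous scaling and the reflection `x ↦ -x` -/

/-- The action of `t > 0` by quasihomogeneous scaling with weights `2`, `1` of `x`, `y`. -/
noncomputable def scl (t : ℝ) (l : Par) : Par :=
  WithLp.toLp 2 fun i => t ^ (![6, 4, 5, 3, 4, 2, 3, 1, 2, 0] i : ℕ) * l i

lemma Bf_scl (t : ℝ) (l : Par) (y : ℝ) : Bf (scl t l) (t * y) = t ^ 4 * Bf l y := by
  simp [Bf, scl]; ring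

lemma Cf_scl (t : ℝ) (l : Par) (y : ℝ) : Cf (scl t l) (t * y) = t ^ 6 * Cf l y := by
  simp [Cf, scl]; ring

lemma Bd_scl (t : ℝ) (l : Par) (y : ℝ) : Bd (scl t l) (t * y) = t ^ 3 * Bd l y := by
  simp [Bd, scl]; ring

lemma Cd_scl (t : ℝ) (l : Par) (y : ℝ) : Cd (scl t l) (t * y) = t ^ 5 * Cd l y := by
  simp [Cd, scl]; ring

lemma hf_scl (s : ℝ) {t : ℝ} (ht : 0 < t) (l : Par) (y : ℝ) :
    hf s (scl t l) (t * y) = t ^ 6 * hf s l y := by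
  have : mf (scl t l) (t * y) = t ^ 2 * mf l y := by
    unfold mf
    rw [Bf_scl, show -(t ^ 4 * Bf l y) / 3 = (t ^ 2) ^ 2 * (-Bf l y / 3) by ring,
      Real.sqrt_mul (by positivity), Real.sqrt_sq (by positivity)]
  unfold hf
  rw [this, Cf_scl]; ring

lemma scl_inv {t : ℝ} (ht : 0 < t) (l : Par) : scl t⁻¹ (scl t l) = l := by
  ext i
  simp only [scl]
  rw [← mul_assoc, ← mul_pow, inv_mul_cancel₀ ht.ne', one_pow, one_mul]

lemma Word.scl {k : ℕ} {σ : Fin k → ℝ} {l : Par} (h : Word σ l) {t : ℝ} (ht : 0 < t) :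
    Word σ (scl t l) := by
  obtain ⟨a, z, b, h, hab⟩ := h
  refine ⟨fun i => t * a i, fun i => t * z i, fun i => t * b i, fun i => ?_, fun i j hij =>
    mul_le_mul_of_nonneg_left (hab i j hij) ht.le⟩
  obtain ⟨h1, h2, h3, h4, h5, h6⟩ := h i
  have ht6 : 0 < t ^ 6 := by positivity
  refine ⟨mul_lt_mul_of_pos_left h1 ht, mul_lt_mul_of_pos_left h2 ht, ?_, ?_, ?_, ?_⟩
  · rw [hf_scl _ ht]; exact mul_pos ht6 h3
  · rw [hf_scl _ ht]; exact mul_neg_of_pos_of_neg ht6 h4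
  · rw [hf_scl _ ht]; exact mul_pos ht6 h5
  · intro y hy
    have e : y = t * (y / t) := by field_simp
    rw [e, hf_scl _ ht]
    refine mul_neg_of_pos_of_neg ht6 (h6 _ ⟨?_, ?_⟩)
    · rw [le_div_iff₀ ht, mul_comm]; exact hy.1
    · rw [div_le_iff₀ ht, mul_comm]; exact hy.2

lemma word_scl_iff {k : ℕ} {σ : Fin k → ℝ} {l : Par} {t : ℝ} (ht : 0 < t) :
    Word σ (scl t l) ↔ Word σ l :=
  ⟨fun h => by simpa [scl_inv ht] using h.scl (inv_pos.2 ht), fun h => h.scl ht⟩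

lemma Sing.of_scl {l : Par} {t : ℝ} (ht : 0 < t) (h : Sing (scl t l)) : Sing l := by
  obtain ⟨x, y, h1, h2, h3⟩ := h
  have ex : x = t ^ 2 * (x / t ^ 2) := by field_simp
  have ey : y = t * (y / t) := by field_simp
  rw [ex, ey] at h1 h2 h3
  rw [Bf_scl] at h1 h2
  rw [Cf_scl] at h1
  rw [Bd_scl, Cd_scl] at h3
  refine ⟨x / t ^ 2, y / t, ?_, ?_, ?_⟩
  · refine (mul_eq_zero_iff_left (a := t ^ 6) (by positivity)).1 ?_
    linear_combination h1
  · refine (mul_eq_zero_iff_left (a := t ^ 4) (by positivity)).1 ?_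
    linear_combination h2
  · refine (mul_eq_zero_iff_left (a := t ^ 5) (by positivity)).1 ?_
    linear_combination h3

lemma exists_scl_small {l : Par} (hl : l 9 = 0) {δ : ℝ} (hδ : 0 < δ) :
    ∃ t : ℝ, 0 < t ∧ ‖scl t l‖ < δ := by
  have hc : Continuous fun t : ℝ => scl t l := by
    unfold scl; fun_prop
  have h0 : scl 0 l = 0 := by
    ext i; fin_cases i <;> simp [scl, hl]
  have h1 : ∀ᶠ t in 𝓝[>] (0 : ℝ), ‖scl t l‖ < δ := by
    have : Tendsto (fun t : ℝ => ‖scl t l‖) (𝓝 0) (𝓝 ‖scl 0 l‖) := (hc.norm).tendsto 0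
    rw [h0, norm_zero] at this
    exact (this.mono_left nhdsWithin_le_nhds).eventually (Iio_mem_nhds hδ)
  obtain ⟨t, ht, ht0⟩ := (h1.and self_mem_nhdsWithin).exists
  exact ⟨t, ht0, ht⟩

/-- The parameter of the curve reflected by `x ↦ -x`: `B` is kept and `C` changes sign. -/
noncomputable def refl (l : Par) : Par :=
  WithLp.toLp 2 fun i => (![-1, 1, -1, 1, -1, 1, -1, 1, -1, 1] i : ℝ) * l i

lemma Bf_refl (l : Par) (y : ℝ) : Bf (refl l) y = Bf l y := by
  simp [Bf, refl]

lemma Cf_refl (l : Par) (y : ℝ) : Cf (refl l) y = -Cf l y := by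
  simp [Cf, refl]; ring

lemma Bd_refl (l : Par) (y : ℝ) : Bd (refl l) y = Bd l y := by
  simp [Bd, refl]

lemma Cd_refl (l : Par) (y : ℝ) : Cd (refl l) y = -Cd l y := by
  simp [Cd, refl]; ring

lemma hf_refl (s : ℝ) (l : Par) (y : ℝ) : hf s (refl l) y = hf (-s) l y := by
  simp [hf, mf, Bf_refl, Cf_refl]

lemma word_refl {k : ℕ} (σ : Fin k → ℝ) (l : Par) : Word σ (refl l) ↔ Word (fun i => -σ i) l := by
  simp only [Word, Osc, hf_refl]

lemma Sing.of_refl {l : Par} (h : Sing (refl l)) : Sing l := by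
  obtain ⟨x, y, h1, h2, h3⟩ := h
  rw [Bf_refl] at h1 h2
  rw [Cf_refl] at h1
  rw [Bd_refl, Cd_refl] at h3
  exact ⟨-x, y, by linear_combination -h1, by linear_combination h2, by linear_combination -h3⟩

/-! ### Nonsingular curves near a given one -/

/-- Adding the constant `c` to `F`. -/
noncomputable def shift (c : ℝ) (l : Par) : Par := l + c • EuclideanSpace.single (0 : Fin 10) (1 : ℝ)

lemma Bf_shift (c : ℝ) (l : Par) (y : ℝ) : Bf (shift c l) y = Bf l y := by
  simp [Bf, shift]

lemma Cf_shift (c : ℝ) (l : Par) (y : ℝ) : Cf (shift c l) y = Cf l y + c := by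
  simp [Cf, shift]; ring

lemma Bd_shift (c : ℝ) (l : Par) (y : ℝ) : Bd (shift c l) y = Bd l y := by
  simp [Bd, shift]

lemma Cd_shift (c : ℝ) (l : Par) (y : ℝ) : Cd (shift c l) y = Cd l y := by
  simp [Cd, shift]

/-- The critical values of `h_s` form a null set (Sard's theorem on the line). -/
lemma volume_critical_values (s : ℝ) (l : Par) :
    MeasureTheory.volume (hf s l '' {y | hd s l y = 0}) = 0 := by
  refine MeasureTheory.addHaar_image_eq_zero_of_det_fderivWithin_eq_zero MeasureTheory.volume
    (f' := fun y => ContinuousLinearMap.toSpanSingleton ℝ (hd s l y))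
    (fun y _ => (hasDerivAt_hf s l y).hasFDerivAt.hasFDerivWithinAt) ?_
  intro y hy
  have hy : hd s l y = 0 := hy
  simp [hy, ContinuousLinearMap.det]

/-- A singular curve in the pencil `F + c` comes from a critical value of some `h_s`. -/
lemma Sing.of_shift {c : ℝ} {l : Par} (h : Sing (shift c l)) :
    ∃ s : ℝ, (s = 1 ∨ s = -1) ∧ -s * c ∈ hf s l '' {y | hd s l y = 0} := by
  obtain ⟨x, y, h1, h2, h3⟩ := h
  rw [Bf_shift] at h1 h2
  rw [Cf_shift] at h1
  rw [Bd_shift, Cd_shift] at h3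
  have hm : mf l y = |x| := by
    unfold mf
    rw [show -Bf l y / 3 = x ^ 2 by linear_combination (-1 / 3) * h2, Real.sqrt_sq_eq_abs]
  rcases le_total 0 x with hx | hx
  · rw [abs_of_nonneg hx] at hm
    refine ⟨1, Or.inl rfl, y, ?_, ?_⟩
    · simp only [hd, hm, mem_ofPred_eq]; linear_combination h3
    · simp only [hf, hm]; linear_combination h1 - x * h2
  · rw [abs_of_nonpos hx] at hm
    refine ⟨-1, Or.inr rfl, y, ?_, ?_⟩
    · simp only [hd, hm, mem_ofPred_eq]; linear_combination -h3
    · simp only [hf, hm]; linear_combination -h1 + x * h2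

/-- A word persists for some nonsingular curve `F + c` with `c > 0`. -/
lemma Word.exists_shift {k : ℕ} {σ : Fin k → ℝ} {l : Par} (h : Word σ l) :
    ∃ c : ℝ, 0 < c ∧ ¬ Sing (shift c l) ∧ Word σ (shift c l) := by
  have hc : Continuous fun c : ℝ => shift c l := by unfold shift; fun_prop
  have ho : IsOpen {c : ℝ | Word σ (shift c l)} := (isOpen_word σ).preimage hc
  have h0 : (0 : ℝ) ∈ {c : ℝ | Word σ (shift c l)} := by simpa [shift] using h
  obtain ⟨r, hr, hsub⟩ := Metric.isOpen_iff.1 ho 0 h0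
  have hn1 := volume_critical_values 1 l
  have hn2 := volume_critical_values (-1) l
  have hn3 : MeasureTheory.volume ((fun c : ℝ => -c) ⁻¹' (hf 1 l '' {y | hd 1 l y = 0})) = 0 := by
    rwa [show (fun c : ℝ => -c) ⁻¹' (hf 1 l '' {y | hd 1 l y = 0}) =
      -(hf 1 l '' {y | hd 1 l y = 0}) from rfl, MeasureTheory.Measure.measure_neg]
  by_contra! hno
  have hss : Ioo 0 r ⊆ ((fun c : ℝ => -c) ⁻¹' (hf 1 l '' {y | hd 1 l y = 0})) ∪
      (hf (-1) l '' {y | hd (-1) l y = 0}) := by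
    intro c hcr
    have hS : Sing (shift c l) := by
      by_contra hS
      refine hno c hcr.1 hS (hsub ?_)
      rw [Metric.mem_ball, dist_zero_right, Real.norm_of_nonneg hcr.1.le]
      exact hcr.2
    obtain ⟨s, hs, hmem⟩ := hS.of_shift
    rcases hs with rfl | rfl
    · left; simpa using hmem
    · right; simpa using hmem
  have hv := MeasureTheory.measure_mono_null hss (MeasureTheory.measure_union_null hn3 hn2)
  rw [Real.volume_Ioo] at hv
  simp at hv
  linarith

/-! ### Explicit curves -/

/-- `27 C² + 4 B³`, the discriminant of `F` with respect to `x` up to sign. -/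
noncomputable def Pf (l : Par) (y : ℝ) : ℝ := 27 * Cf l y ^ 2 + 4 * Bf l y ^ 3

lemma hf_pos_of {s : ℝ} (hs : s = 1 ∨ s = -1) {l : Par} {y : ℝ} (hC : 0 < s * Cf l y)
    (hP : 0 < Pf l y) : 0 < hf s l y := by
  unfold hf
  rcases le_total (Bf l y) 0 with hB | hB
  · have hm := mf_sq hB
    have h6 : 27 * (2 * mf l y ^ 3) ^ 2 = -4 * Bf l y ^ 3 := by
      rw [show Bf l y = -(3 * mf l y ^ 2) by linarith]; ring
    have hs2 : (s * Cf l y) ^ 2 = Cf l y ^ 2 := by rcases hs with rfl | rfl <;> ring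
    have : (2 * mf l y ^ 3) ^ 2 < (s * Cf l y) ^ 2 := by
      rw [hs2]; unfold Pf at hP; linarith
    linarith [lt_of_pow_lt_pow_left₀ 2 hC.le this]
  · have hm : mf l y = 0 := Real.sqrt_eq_zero_of_nonpos (by linarith)
    rw [hm]; linarith

lemma hf_neg_of {s : ℝ} (hs : s = 1 ∨ s = -1) {l : Par} {y : ℝ} (hP : Pf l y < 0) :
    hf s l y < 0 := by
  unfold Pf at hP
  have hB : Bf l y ≤ 0 := by
    by_contra! h
    have := pow_pos h 3
    have := sq_nonneg (Cf l y)
    linarith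
  have hm := mf_sq hB
  have h6 : 27 * (2 * mf l y ^ 3) ^ 2 = -4 * Bf l y ^ 3 := by
    rw [show Bf l y = -(3 * mf l y ^ 2) by linarith]; ring
  have hs2 : (s * Cf l y) ^ 2 = Cf l y ^ 2 := by rcases hs with rfl | rfl <;> ring
  have h0 : 0 ≤ 2 * mf l y ^ 3 := by have := mf_nonneg l y; positivity
  have : (s * Cf l y) ^ 2 < (2 * mf l y ^ 3) ^ 2 := by rw [hs2]; linarith
  unfold hf
  linarith [lt_of_pow_lt_pow_left₀ 2 h0 this]

lemma hf_neg_of_neg {s : ℝ} {l : Par} {y : ℝ} (hC : s * Cf l y < 0) : hf s l y < 0 := by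
  have h0 : 0 ≤ 2 * mf l y ^ 3 := by have := mf_nonneg l y; positivity
  unfold hf; linarith

lemma pos_of_hf_pos {s : ℝ} {l : Par} {y : ℝ} (h : 0 < hf s l y) : 0 < s * Cf l y := by
  have h0 : 0 ≤ 2 * mf l y ^ 3 := by have := mf_nonneg l y; positivity
  unfold hf at h; linarith

lemma Pf_pos_of_hf {s : ℝ} (hs : s = 1 ∨ s = -1) {l : Par} {y : ℝ} (h : 0 < hf s l y) :
    0 < Pf l y := by
  have hsC := pos_of_hf_pos h
  have hs2 : (s * Cf l y) ^ 2 = Cf l y ^ 2 := by rcases hs with rfl | rfl <;> ring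
  unfold Pf
  rcases le_total (Bf l y) 0 with hB | hB
  · have hm := mf_sq hB
    have h6 : 27 * (2 * mf l y ^ 3) ^ 2 = -4 * Bf l y ^ 3 := by
      rw [show Bf l y = -(3 * mf l y ^ 2) by linarith]; ring
    have h0 : 0 ≤ 2 * mf l y ^ 3 := by have := mf_nonneg l y; positivity
    unfold hf at h
    have := pow_lt_pow_left₀ (sub_pos.1 h) h0 two_ne_zero
    linarith
  · have := pow_nonneg hB 3
    have := pow_pos hsC 2
    linarith

lemma Osc.Pf_neg {s : ℝ} (hs : s = 1 ∨ s = -1) {l : Par} {a z b : ℝ} (h : Osc s l a z b) :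
    Pf l z < 0 := by
  obtain ⟨h1, h2, -, h3, -, h4⟩ := h
  have h4 := h4 z ⟨h1.le, h2.le⟩
  have hm := mf_sq (Bf_neg_of_hf h3.le h4).le
  have h6 : 27 * (2 * mf l z ^ 3) ^ 2 = -4 * Bf l z ^ 3 := by
    rw [show Bf l z = -(3 * mf l z ^ 2) by linarith]; ring
  have hs2 : (s * Cf l z) ^ 2 = Cf l z ^ 2 := by rcases hs with rfl | rfl <;> ring
  unfold hf at h3 h4
  have : (s * Cf l z) ^ 2 < (2 * mf l z ^ 3) ^ 2 := sq_lt_sq' (by linarith) (by linarith)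
  unfold Pf
  linarith

/-- The curve has at least `k` ovals on the right. -/
def Rt (k : ℕ) (l : Par) : Prop := Word (fun _ : Fin k => (1 : ℝ)) l

/-- The curve has at least `k` ovals on the left. -/
def Lt (k : ℕ) (l : Par) : Prop := Word (fun _ : Fin k => (-1 : ℝ)) l

/-- Some oval on the right precedes an oval on the left. -/
def RL (l : Par) : Prop := Word ![(1 : ℝ), -1] l

lemma Rt.pred {k : ℕ} {l : Par} (h : Rt (k + 1) l) : Rt k l := h.comp Fin.strictMono_castSucc

/-- If `C > 0` wherever `B ≤ 0`, there is no oval on the left. -/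
lemma not_Lt_one {l : Par} (h : ∀ y, Bf l y ≤ 0 → 0 < Cf l y) : ¬ Lt 1 l := by
  rintro ⟨a, z, b, hO, -⟩
  obtain ⟨α, ξ, β, hD, -⟩ := (hO 0).deg
  have h1 := h α hD.Bf_left
  have h2 : hf (-1) l α = 0 := hD.2.2.1
  have h3 := hf_neg_of_neg (s := -1) (l := l) (y := α) (by linarith)
  linarith

/-- The parameter with given coefficients of `B` (from `y³` down) and of `C` (from `y⁴` down). -/
noncomputable def mk (b₃ b₂ b₁ b₀ c₄ c₃ c₂ c₁ c₀ : ℝ) : Par :=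
  !₂[c₀, b₀, c₁, b₁, c₂, b₂, c₃, b₃, c₄, 0]

lemma Bf_mk (b₃ b₂ b₁ b₀ c₄ c₃ c₂ c₁ c₀ y : ℝ) : Bf (mk b₃ b₂ b₁ b₀ c₄ c₃ c₂ c₁ c₀) y =
    y ^ 4 + b₃ * y ^ 3 + b₂ * y ^ 2 + b₁ * y + b₀ := by
  simp [Bf, mk]

lemma Cf_mk (b₃ b₂ b₁ b₀ c₄ c₃ c₂ c₁ c₀ y : ℝ) : Cf (mk b₃ b₂ b₁ b₀ c₄ c₃ c₂ c₁ c₀) y =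
    c₄ * y ^ 4 + c₃ * y ^ 3 + c₂ * y ^ 2 + c₁ * y + c₀ := by
  simp [Cf, mk]

lemma Bd_mk (b₃ b₂ b₁ b₀ c₄ c₃ c₂ c₁ c₀ y : ℝ) : Bd (mk b₃ b₂ b₁ b₀ c₄ c₃ c₂ c₁ c₀) y =
    4 * y ^ 3 + 3 * b₃ * y ^ 2 + 2 * b₂ * y + b₁ := by
  simp [Bd, mk]

lemma Cd_mk (b₃ b₂ b₁ b₀ c₄ c₃ c₂ c₁ c₀ y : ℝ) : Cd (mk b₃ b₂ b₁ b₀ c₄ c₃ c₂ c₁ c₀) y =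
    4 * c₄ * y ^ 3 + 3 * c₃ * y ^ 2 + 2 * c₂ * y + c₁ := by
  simp [Cd, mk]

lemma mk_nine (b₃ b₂ b₁ b₀ c₄ c₃ c₂ c₁ c₀ : ℝ) : mk b₃ b₂ b₁ b₀ c₄ c₃ c₂ c₁ c₀ 9 = 0 := by
  simp [mk]

lemma shift_nine {l : Par} (h : l 9 = 0) (c : ℝ) : shift c l 9 = 0 := by
  simp [shift, h]

lemma refl_nine {l : Par} (h : l 9 = 0) : refl l 9 = 0 := by
  simp [refl, h]

/-- An oval on the side `s`, checked by rational arithmetic. -/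
lemma osc_of {s : ℝ} (hs : s = 1 ∨ s = -1) {l : Par} {a z b : ℝ} (haz : a < z) (hzb : z < b)
    (ha : 0 < Pf l a) (hz : Pf l z < 0) (hb : 0 < Pf l b) (hC : ∀ y ∈ Icc a b, 0 < s * Cf l y) :
    Osc s l a z b :=
  ⟨haz, hzb, hf_pos_of hs (hC a ⟨le_rfl, (haz.trans hzb).le⟩) ha, hf_neg_of hs hz,
    hf_pos_of hs (hC b ⟨(haz.trans hzb).le, le_rfl⟩) hb,
    fun y hy => hf_neg_of_neg (by linarith [hC y hy])⟩

/-- No ovals: `B > 0` everywhere. -/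
lemma exists_empty : ∃ l : Par, l 9 = 0 ∧ ¬ Sing l ∧ ¬ Rt 1 l ∧ ¬ Lt 1 l := by
  have hB : ∀ y, 0 < Bf (mk 0 0 0 1 0 0 0 0 0) y := fun y => by
    rw [Bf_mk]; nlinarith [sq_nonneg (y ^ 2)]
  have hw : ∀ s, ¬ Word (fun _ : Fin 1 => s) (mk 0 0 0 1 0 0 0 0 0) := by
    rintro s ⟨a, z, b, hO, -⟩
    obtain ⟨α, ξ, β, hD, -⟩ := (hO 0).deg
    linarith [hB α, hD.Bf_left]
  refine ⟨mk 0 0 0 1 0 0 0 0 0, mk_nine .., ?_, hw 1, hw (-1)⟩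
  rintro ⟨x, y, -, h2, -⟩
  nlinarith [hB y, sq_nonneg x]

/-- For constant `C`, the sign of `h₁` compares the values of `B`. -/
lemma Bf_lt_of_const {l : Par} {κ : ℝ} (hC : ∀ y, Cf l y = κ) {z b : ℝ} (hz : hf 1 l z < 0)
    (hb : 0 < hf 1 l b) : Bf l z < Bf l b := by
  by_contra! h
  have hm : mf l z ≤ mf l b := Real.sqrt_le_sqrt (by linarith)
  have := pow_le_pow_left₀ (mf_nonneg l z) hm 3
  simp only [hf, hC] at hz hb
  linarith

lemma exists_R : ∃ l : Par, l 9 = 0 ∧ ¬ Sing l ∧ Rt 1 l ∧ ¬ Rt 2 l ∧ ¬ Lt 1 l := by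
  set l₀ := mk 0 0 0 (-1) 0 0 0 0 (1 / 100) with hl₀
  have hw : Rt 1 l₀ := by
    refine ⟨fun _ => -1, fun _ => 0, fun _ => 1, fun i => ?_, fun i j hij => ?_⟩
    · refine osc_of (Or.inl rfl) (by norm_num) (by norm_num) ?_ ?_ ?_ fun y _ => ?_ <;>
        norm_num [Pf, hl₀, Bf_mk, Cf_mk]
    · omega
  obtain ⟨c, hc, hS, hw⟩ := Word.exists_shift hw
  have hB : ∀ y, Bf (shift c l₀) y = y ^ 4 - 1 := fun y => by
    rw [Bf_shift, Bf_mk]; ring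
  have hC : ∀ y, Cf (shift c l₀) y = 1 / 100 + c := fun y => by
    rw [Cf_shift, Cf_mk]; ring
  refine ⟨_, shift_nine (mk_nine ..) c, hS, hw, ?_, not_Lt_one fun y _ => ?_⟩
  · rintro ⟨a, z, b, hO, hab⟩
    have h1 := Bf_lt_of_const hC (hO 0).2.2.2.1 (hO 0).2.2.2.2.1
    have h2 := Bf_lt_of_const hC (hO 1).2.2.2.1 (hO 0).2.2.2.2.1
    have h3 : z 0 < b 0 := (hO 0).2.1
    have h4 : b 0 < z 1 := (hab 0 1 (by decide)).trans_lt (hO 1).1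
    rw [hB, hB] at h1 h2
    have e : ∀ u v : ℝ, u ^ 4 - 1 < v ^ 4 - 1 → |u| < |v| := fun u v h => by
      refine lt_of_pow_lt_pow_left₀ 4 (abs_nonneg v) ?_
      rw [← abs_pow, ← abs_pow, abs_of_nonneg (by positivity), abs_of_nonneg (by positivity)]
      linarith
    have h1 := abs_lt.1 (e _ _ h1)
    have h2 := abs_lt.1 (e _ _ h2)
    rcases abs_cases (b 0) with ⟨h, -⟩ | ⟨h, -⟩ <;> rw [h] at h1 h2 <;> linarith
  · rw [hC]; linarith

lemma exists_RR : ∃ l : Par, l 9 = 0 ∧ ¬ Sing l ∧ Rt 2 l ∧ ¬ Rt 3 l ∧ ¬ Lt 1 l := by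
  set l₀ := mk 0 (-2) 0 (3 / 4) 0 0 0 0 (1 / 100) with hl₀
  have hw : Rt 2 l₀ := by
    refine ⟨![-2, 0], ![-1, 1], ![0, 2], fun i => ?_, fun i j hij => ?_⟩
    · fin_cases i <;>
      · refine osc_of (Or.inl rfl) ?_ ?_ ?_ ?_ ?_ fun y _ => ?_ <;>
          norm_num [Pf, hl₀, Bf_mk, Cf_mk]
    · fin_cases i <;> fin_cases j <;> simp at hij ⊢
  obtain ⟨c, hc, hS, hw⟩ := Word.exists_shift hw
  have hB : ∀ y, Bf (shift c l₀) y = (y ^ 2 - 1) ^ 2 - 1 / 4 := fun y => by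
    rw [Bf_shift, Bf_mk]; ring
  have hC : ∀ y, Cf (shift c l₀) y = 1 / 100 + c := fun y => by
    rw [Cf_shift, Cf_mk]; ring
  refine ⟨_, shift_nine (mk_nine ..) c, hS, hw, ?_, not_Lt_one fun y _ => ?_⟩
  · rintro ⟨a, z, b, hO, hab⟩
    -- `B` is quasiconvex on each half-line, so two neighbouring ovals lie on different half-lines
    have hcon : ∀ u v w : ℝ, u < v → v < w → Bf (shift c l₀) u < Bf (shift c l₀) v →
        Bf (shift c l₀) w < Bf (shift c l₀) v → u ≤ 0 ∧ 0 ≤ w := by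
      intro u v w h1 h2 h3 h4
      rw [hB, hB] at h3 h4
      by_contra hno
      rcases lt_or_ge 0 u with hu | hu
      · have e1 : u ^ 2 < v ^ 2 := by nlinarith
        have e2 : v ^ 2 < w ^ 2 := by nlinarith
        have e3 : 0 < v ^ 2 + u ^ 2 - 2 :=
          pos_of_mul_pos_right (a := v ^ 2 - u ^ 2) (by linarith) (by linarith)
        have := mul_pos (sub_pos.2 e2) (by linarith : 0 < w ^ 2 + v ^ 2 - 2)
        linarith
      · have hw : w < 0 := by
          by_contra! hw; exact hno ⟨hu, hw⟩
        have e1 : v ^ 2 < u ^ 2 := by nlinarith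
        have e2 : w ^ 2 < v ^ 2 := by nlinarith
        have e3 : 0 < v ^ 2 + w ^ 2 - 2 :=
          pos_of_mul_pos_right (a := v ^ 2 - w ^ 2) (by linarith) (by linarith)
        have := mul_pos (sub_pos.2 e1) (by linarith : 0 < u ^ 2 + v ^ 2 - 2)
        linarith
    have h01 := hcon (z 0) (b 0) (z 1) (hO 0).2.1 ((hab 0 1 (by decide)).trans_lt (hO 1).1)
      (Bf_lt_of_const hC (hO 0).2.2.2.1 (hO 0).2.2.2.2.1)
      (Bf_lt_of_const hC (hO 1).2.2.2.1 (hO 0).2.2.2.2.1)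
    have h12 := hcon (z 1) (b 1) (z 2) (hO 1).2.1 ((hab 1 2 (by decide)).trans_lt (hO 2).1)
      (Bf_lt_of_const hC (hO 1).2.2.2.1 (hO 1).2.2.2.2.1)
      (Bf_lt_of_const hC (hO 2).2.2.2.1 (hO 1).2.2.2.2.1)
    have hz : z 1 = 0 := le_antisymm h12.1 h01.2
    have hneg := Bf_neg_of_hf (hO 1).2.2.2.1.le ((hO 1).2.2.2.2.2 (z 1) ⟨(hO 1).1.le, (hO 1).2.1.le⟩)
    rw [hB, hz] at hneg
    norm_num at hneg
  · rw [hC]; linarith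

/-- Three ovals on the right and no more. In terms of `u = y² - 12` this is `B = u² - 196` and
`C = 1094.8 + 26.2 u - 4.6 u²`, for which `C = 2 m³` exactly at `u = -11, -7, -2`, where
`m = 5, 7, 8`. -/
lemma exists_RRR : ∃ l : Par, l 9 = 0 ∧ ¬ Sing l ∧ Rt 3 l ∧ ¬ Rt 4 l ∧ ¬ Lt 1 l := by
  set l₀ := mk 0 (-24) 0 (-52) (-23 / 5) 0 (683 / 5) 0 118 with hl₀
  have hB : ∀ y, Bf l₀ y = y ^ 4 - 24 * y ^ 2 - 52 := fun y => by
    rw [Bf_mk]; ring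
  have hC : ∀ y, Cf l₀ y = -23 / 5 * y ^ 4 + 683 / 5 * y ^ 2 + 118 := fun y => by
    rw [Cf_mk]; ring
  -- the cubic factor of the discriminant which has no zero `u ≥ -12`
  have hQ : ∀ y : ℝ, 0 < 4 * (y ^ 2 - 12) ^ 3 - 80 * (y ^ 2 - 12) ^ 2
      - 15817 / 25 * (y ^ 2 - 12) + 364238 / 25 := fun y => by
    have h0 : 0 ≤ y ^ 2 := sq_nonneg y
    generalize y ^ 2 = v at h0
    nlinarith [mul_nonneg h0 (sq_nonneg (v - 12 - 83 / 5)), sq_nonneg (v - 12 - 147 / 10)]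
  have hP : ∀ y, Pf l₀ y = (y ^ 2 - 1) * (y ^ 2 - 5) * (y ^ 2 - 10) *
      (4 * (y ^ 2 - 12) ^ 3 - 80 * (y ^ 2 - 12) ^ 2
      - 15817 / 25 * (y ^ 2 - 12) + 364238 / 25) := fun y => by
    unfold Pf; rw [hB, hC]; ring
  have hCpos : ∀ y, Bf l₀ y ≤ 0 → 0 < Cf l₀ y := fun y h => by
    rw [hB] at h
    rw [hC]
    have h0 : 0 ≤ y ^ 2 := sq_nonneg y
    have h26 : y ^ 2 ≤ 26 := by nlinarith
    nlinarith
  refine ⟨l₀, mk_nine .., ?_, ?_, ?_, not_Lt_one hCpos⟩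
  · rintro ⟨x, y, h1, h2, h3⟩
    have hC2 : Cf l₀ y = 2 * x ^ 3 := by linear_combination h1 - x * h2
    have hB3 : Bf l₀ y = -3 * x ^ 2 := by linear_combination h2
    have hP0 : Pf l₀ y = 0 := by unfold Pf; rw [hC2, hB3]; ring
    have hBd : Bd l₀ y = 4 * y * (y ^ 2 - 12) := by rw [Bd_mk]; ring
    have hCd : Cd l₀ y = y * (-92 / 5 * y ^ 2 + 1366 / 5) := by rw [Cd_mk]; ring
    rw [hBd, hCd] at h3
    have hx0 : 0 < x := by
      have := hCpos y (by rw [hB3]; nlinarith [sq_nonneg x])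
      rw [hC2] at this
      by_contra! hx
      nlinarith [sq_nonneg x, mul_nonneg (neg_nonneg.2 hx) (sq_nonneg x)]
    have hy0 : y ≠ 0 := by
      rintro rfl
      rw [hP] at hP0; norm_num at hP0
    have h3 : 4 * (y ^ 2 - 12) * x + (-92 / 5 * y ^ 2 + 1366 / 5) = 0 :=
      (mul_eq_zero_iff_left hy0).1 (by linear_combination h3)
    rw [hP] at hP0
    rw [hB] at hB3
    have hfac := (mul_eq_zero.1 hP0).resolve_right (hQ y).ne'
    have hxs : ∀ r : ℝ, 0 < r → x ^ 2 = r ^ 2 → x = r := fun r hr h =>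
      (pow_left_inj₀ hx0.le hr.le two_ne_zero).1 h
    rcases mul_eq_zero.1 hfac with h | h
    · rcases mul_eq_zero.1 h with h | h
      · have e : y ^ 2 = 1 := by linarith
        have := hxs 5 (by norm_num) (by nlinarith)
        rw [e, this] at h3; norm_num at h3
      · have e : y ^ 2 = 5 := by linarith
        have := hxs 7 (by norm_num) (by nlinarith)
        rw [e, this] at h3; norm_num at h3
    · have e : y ^ 2 = 10 := by linarith
      have := hxs 8 (by norm_num) (by nlinarith)
      rw [e, this] at h3; norm_num at h3
  · refine ⟨![-4, -2, 2], ![-3, 0, 3], ![-2, 2, 4], fun i => ?_, fun i j hij => ?_⟩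
    · have hc : ∀ y : ℝ, -4 ≤ y → y ≤ 4 → 0 < 1 * Cf l₀ y := fun y h1 h2 => by
        rw [one_mul]
        refine hCpos y ?_
        have h16 : y ^ 2 ≤ 16 := by nlinarith
        rw [hB]; nlinarith [sq_nonneg y]
      fin_cases i <;>
      · refine osc_of (Or.inl rfl) (by norm_num) (by norm_num) (by rw [hP]; norm_num)
          (by rw [hP]; norm_num) (by rw [hP]; norm_num) ?_
        rintro y ⟨hy1, hy2⟩
        norm_num at hy1 hy2
        exact hc y (by linarith) (by linarith)
    · fin_cases i <;> fin_cases j <;> simp at hij ⊢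
  · rintro ⟨a, z, b, hO, hab⟩
    have hneg : ∀ i, z i ^ 2 < 1 ∨ 5 < z i ^ 2 ∧ z i ^ 2 < 10 := fun i => by
      have h := (hO i).Pf_neg (Or.inl rfl)
      rw [hP] at h
      have h := neg_of_mul_neg_left h (hQ _).le
      by_contra! hn
      rcases le_or_gt (z i ^ 2) 5 with h5 | h5
      · have := mul_nonneg (mul_nonneg (sub_nonneg.2 hn.1) (sub_nonneg.2 h5))
          (by linarith : 0 ≤ 10 - z i ^ 2)
        linarith
      · have := mul_nonneg (mul_nonneg (sub_nonneg.2 hn.1) (sub_nonneg.2 h5.le))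
          (sub_nonneg.2 (hn.2 h5))
        linarith
    have hpos : ∀ i, (1 < b i ^ 2 ∧ b i ^ 2 < 5) ∨ 10 < b i ^ 2 := fun i => by
      have h := Pf_pos_of_hf (Or.inl rfl) (hO i).2.2.2.2.1
      rw [hP] at h
      have h := pos_of_mul_pos_left h (hQ _).le
      by_contra! hn
      rcases le_or_gt (b i ^ 2) 1 with h1 | h1
      · have := mul_nonneg (mul_nonneg (sub_nonneg.2 h1) (by linarith : 0 ≤ 5 - b i ^ 2))
          (by linarith : 0 ≤ 10 - b i ^ 2)
        linarith
      · have := mul_nonneg (mul_nonneg (sub_nonneg.2 h1.le) (sub_nonneg.2 (hn.1 h1)))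
          (sub_nonneg.2 hn.2)
        linarith
    have hzb : ∀ i, z i < b i := fun i => (hO i).2.1
    have hbz : ∀ i j, i < j → b i < z j := fun i j hij => (hab i j hij).trans_lt (hO j).1
    -- the points `z i` leave in turn the three intervals where the discriminant is negative
    have hz1 : -1 < z 1 := by
      by_contra! h
      have e1 := hzb 0
      have e2 := hbz 0 1 (by decide)
      have f1 : b 0 ^ 2 < z 0 ^ 2 := by nlinarith
      have f2 : z 1 ^ 2 < b 0 ^ 2 := by nlinarith
      have f3 : 1 ≤ z 1 ^ 2 := by nlinarith
      rcases hneg 1 with h1 | ⟨h1, h1'⟩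
      · linarith
      rcases hneg 0 with h0 | ⟨h0, h0'⟩
      · linarith
      rcases hpos 0 with ⟨h2, h2'⟩ | h2 <;> linarith
    have hz2 : 1 < z 2 := by
      by_contra! h
      have e1 := hzb 1
      have e2 := hbz 1 2 (by decide)
      have f1 : b 1 ^ 2 < 1 := by nlinarith
      rcases hpos 1 with h2 | h2
      · linarith [h2.1]
      · linarith
    have e1 := hzb 2
    have e2 := hbz 2 3 (by decide)
    have f1 : z 2 ^ 2 < b 2 ^ 2 := by nlinarith
    have f2 : b 2 ^ 2 < z 3 ^ 2 := by nlinarith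
    have f3 : 1 < z 2 ^ 2 := by nlinarith
    rcases hneg 2 with h0 | ⟨h0, h0'⟩
    · linarith
    rcases hneg 3 with h1 | ⟨h1, h1'⟩
    · linarith
    rcases hpos 2 with ⟨h2, h2'⟩ | h2 <;> linarith


/-- Four ovals on the right. Here `B = (y + 1) (y - 46) (y² + 9 / 5000)`, and the oscillations of
`27 C² + 4 B³` occur at very different scales of `y`. -/
lemma exists_RRRR : ∃ l : Par, l 9 = 0 ∧ ¬ Sing l ∧ Rt 4 l ∧ ¬ Lt 1 l := by
  set l₀ := mk (-45) (9 / 5000 - 46) (-81 / 1000) (-828 / 10000) 281 (236 / 5) (302 / 25)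
    (-129 / 1000) (67 / 10000) with hl₀
  have hC : ∀ y, 0 < Cf l₀ y := fun y => by
    rw [Cf_mk]
    have h1 : 0 ≤ y ^ 2 * (y + 59 / 702) ^ 2 := by positivity
    nlinarith [sq_nonneg (y - 129 / 20080), sq_nonneg (y * (281 * y + 118 / 5))]
  have hw : Rt 4 l₀ := by
    refine ⟨![-1, -7 / 100, 1 / 10, 7 / 4], ![-18 / 100, 1 / 100, 35 / 100, 19 / 2],
      ![-7 / 100, 1 / 10, 7 / 4, 46], fun i => ?_, fun i j hij => ?_⟩
    · fin_cases i <;>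
      · refine osc_of (Or.inl rfl) ?_ ?_ ?_ ?_ ?_ fun y _ => by linarith [hC y]
        all_goals norm_num [Pf, hl₀, Bf_mk, Cf_mk]
    · fin_cases i <;> fin_cases j <;> first | (simp at hij; done) | norm_num
  obtain ⟨c, hc, hS, hw⟩ := Word.exists_shift hw
  refine ⟨_, shift_nine (mk_nine ..) c, hS, hw, not_Lt_one fun y _ => ?_⟩
  rw [Cf_shift]; exact add_pos (hC y) hc

/-- One oval on the left followed by one on the right, and not the other way round. -/
lemma exists_LR : ∃ l : Par, l 9 = 0 ∧ ¬ Sing l ∧ Word ![(-1 : ℝ), 1] l ∧ ¬ RL l := by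
  set l₀ := mk 0 (-2) 0 (1 / 4) 0 0 0 (1 / 10) 0 with hl₀
  have hw : Word ![(-1 : ℝ), 1] l₀ := by
    refine ⟨![-7 / 5, 3 / 10], ![-1, 1], ![-3 / 10, 7 / 5], fun i => ?_, fun i j hij => ?_⟩
    · fin_cases i
      · refine osc_of (Or.inr rfl) ?_ ?_ ?_ ?_ ?_ ?_
        · norm_num
        · norm_num
        · norm_num [Pf, hl₀, Bf_mk, Cf_mk]
        · norm_num [Pf, hl₀, Bf_mk, Cf_mk]
        · norm_num [Pf, hl₀, Bf_mk, Cf_mk]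
        · rintro y ⟨hy1, hy2⟩
          norm_num at hy1 hy2
          simp only [Cf_mk, hl₀]
          linarith
      · refine osc_of (Or.inl rfl) ?_ ?_ ?_ ?_ ?_ ?_
        · norm_num
        · norm_num
        · norm_num [Pf, hl₀, Bf_mk, Cf_mk]
        · norm_num [Pf, hl₀, Bf_mk, Cf_mk]
        · norm_num [Pf, hl₀, Bf_mk, Cf_mk]
        · rintro y ⟨hy1, hy2⟩
          norm_num at hy1 hy2
          simp only [Cf_mk, hl₀]
          linarith
    · fin_cases i <;> fin_cases j <;> first | (simp at hij; done) | norm_num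
  obtain ⟨c, hc, hS, hw⟩ := Word.exists_shift hw
  refine ⟨_, shift_nine (mk_nine ..) c, hS, hw, ?_⟩
  -- `C` is increasing, so it cannot be positive over one oval and negative over a later one
  rintro ⟨a, z, b, hO, hab⟩
  have h0 := pos_of_hf_pos (hO 0).2.2.1
  have h1 := pos_of_hf_pos (hO 1).2.2.1
  have e1 := (hO 0).1
  have e2 := (hO 0).2.1
  have e3 := hab 0 1 (by decide)
  rw [Cf_shift, Cf_mk] at h0 h1
  simp only [Matrix.cons_val_zero, Matrix.cons_val_one] at h0 h1
  linarith

/-! ### The invariant -/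

open Classical in
/-- A number attached to a parameter, determined by which of the words `Rᵏ`, `Lᵏ`
(`k = 1, …, 4`) and `RL` occur in it. -/
noncomputable def code (l : Par) : ℕ :=
  if Rt 1 l ∧ Lt 1 l then (if RL l then 10 else 9)
  else if Rt 4 l then 4 else if Rt 3 l then 3 else if Rt 2 l then 2 else if Rt 1 l then 1
  else if Lt 4 l then 8 else if Lt 3 l then 7 else if Lt 2 l then 6 else if Lt 1 l then 5 else 0

lemma code_congr {l l' : Par} (h : ∀ (k : ℕ) (σ : Fin k → ℝ), (∀ i, σ i = 1 ∨ σ i = -1) →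
    (Word σ l ↔ Word σ l')) : code l = code l' := by
  have hR : ∀ k, Rt k l ↔ Rt k l' := fun k => h k _ fun _ => Or.inl rfl
  have hL : ∀ k, Lt k l ↔ Lt k l' := fun k => h k _ fun _ => Or.inr rfl
  have hRL : RL l ↔ RL l' := h 2 _ fun i => by fin_cases i <;> simp
  unfold code
  rw [propext (hR 1), propext (hR 2), propext (hR 3), propext (hR 4), propext (hL 1),
    propext (hL 2), propext (hL 3), propext (hL 4), propext hRL]

lemma Rt_refl (k : ℕ) (l : Par) : Rt k (refl l) ↔ Lt k l := word_refl _ _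

lemma Lt_refl (k : ℕ) (l : Par) : Lt k (refl l) ↔ Rt k l := by
  unfold Lt Rt; rw [word_refl]; simp

lemma not_Rt_of {k : ℕ} {l : Par} (h : ¬ Rt k l) {n : ℕ} (hn : k ≤ n) : ¬ Rt n l := by
  induction n, hn using Nat.le_induction with
  | base => exact h
  | succ n _ ih => exact fun h' => ih h'.pred

lemma Lt.pred {k : ℕ} {l : Par} (h : Lt (k + 1) l) : Lt k l := h.comp Fin.strictMono_castSucc

lemma not_Lt_of {k : ℕ} {l : Par} (h : ¬ Lt k l) {n : ℕ} (hn : k ≤ n) : ¬ Lt n l := by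
  induction n, hn using Nat.le_induction with
  | base => exact h
  | succ n _ ih => exact fun h' => ih h'.pred

/-- A curve with `k` ovals on the right, no more than that if `k < 4`, and none on the left. -/
lemma exists_right (k : ℕ) (hk : k ≤ 4) : ∃ l : Par, l 9 = 0 ∧ ¬ Sing l ∧ (1 ≤ k → Rt k l) ∧
    (k < 4 → ¬ Rt (k + 1) l) ∧ ¬ Lt 1 l := by
  interval_cases k
  · obtain ⟨l, h1, h2, h3, h4⟩ := exists_empty
    exact ⟨l, h1, h2, by simp, fun _ => h3, h4⟩
  · obtain ⟨l, h1, h2, h3, h4, h5⟩ := exists_R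
    exact ⟨l, h1, h2, fun _ => h3, fun _ => h4, h5⟩
  · obtain ⟨l, h1, h2, h3, h4, h5⟩ := exists_RR
    exact ⟨l, h1, h2, fun _ => h3, fun _ => h4, h5⟩
  · obtain ⟨l, h1, h2, h3, h4, h5⟩ := exists_RRR
    exact ⟨l, h1, h2, fun _ => h3, fun _ => h4, h5⟩
  · obtain ⟨l, h1, h2, h3, h5⟩ := exists_RRRR
    exact ⟨l, h1, h2, fun _ => h3, by simp, h5⟩

lemma code_right {k : ℕ} (hk : k ≤ 4) {l : Par} (h1 : 1 ≤ k → Rt k l)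
    (h2 : k < 4 → ¬ Rt (k + 1) l) (h3 : ¬ Lt 1 l) : code l = k := by
  have hL2 := not_Lt_of h3 (n := 2) (by norm_num)
  have hL3 := not_Lt_of h3 (n := 3) (by norm_num)
  have hL4 := not_Lt_of h3 (n := 4) (by norm_num)
  have hR : k < 4 → ∀ n, k + 1 ≤ n → ¬ Rt n l := fun h n hn => not_Rt_of (h2 h) hn
  unfold code
  interval_cases k <;> simp_all

lemma code_left {k : ℕ} (hk : k ≤ 4) (hk1 : 1 ≤ k) {l : Par} (h1 : Lt k l)
    (h2 : k < 4 → ¬ Lt (k + 1) l) (h3 : ¬ Rt 1 l) : code l = k + 4 := by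
  have hL2 := not_Rt_of h3 (n := 2) (by norm_num)
  have hL3 := not_Rt_of h3 (n := 3) (by norm_num)
  have hL4 := not_Rt_of h3 (n := 4) (by norm_num)
  have hR : k < 4 → ∀ n, k + 1 ≤ n → ¬ Lt n l := fun h n hn => not_Lt_of (h2 h) hn
  unfold code
  interval_cases k <;> simp_all

/-- All eleven values of the invariant occur. -/
lemma exists_code (i : Fin 11) : ∃ l : Par, l 9 = 0 ∧ ¬ Sing l ∧ code l = i := by
  obtain ⟨i, hi⟩ := i
  rcases le_or_gt i 4 with h | h
  · obtain ⟨l, h1, h2, h3, h4, h5⟩ := exists_right i h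
    exact ⟨l, h1, h2, code_right h h3 h4 h5⟩
  rcases le_or_gt i 8 with h8 | h8
  · obtain ⟨k, rfl⟩ : ∃ k, i = k + 4 := ⟨i - 4, by omega⟩
    obtain ⟨l, h1, h2, h3, h4, h5⟩ := exists_right k (by omega)
    exact ⟨refl l, refl_nine h1, fun h => h2 h.of_refl, code_left (by omega) (by omega)
      ((Lt_refl _ _).2 (h3 (by omega))) (fun h => by rw [Lt_refl]; exact h4 h)
      (by rwa [Rt_refl])⟩
  obtain ⟨l, h1, h2, h3, h4⟩ := exists_LR
  have hL : Lt 1 l := by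
    have := h3.comp (e := fun _ : Fin 1 => (0 : Fin 2)) (fun i j hij => by omega)
    exact this
  have hR : Rt 1 l := by
    have := h3.comp (e := fun _ : Fin 1 => (1 : Fin 2)) (fun i j hij => by omega)
    exact this
  obtain rfl | rfl : i = 9 ∨ i = 10 := by omega
  · exact ⟨l, h1, h2, by simp [code, hL, hR, h4]⟩
  · have hRL : RL (refl l) := by
      unfold RL
      rw [word_refl]
      convert h3 using 1
      funext i; fin_cases i <;> simp
    exact ⟨refl l, refl_nine h1, fun h => h2 h.of_refl, by
      simp [code, Lt_refl, Rt_refl, hL, hR, hRL]⟩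

/-! ### The discriminant in terms of `B` and `C` -/

lemma J101Def_eq (p : EuclideanSpace ℝ (Fin 2)) (l : Par) :
    J101Def p l = p 0 ^ 3 + Bf l (p 1) * p 0 + Cf l (p 1) := by
  unfold J101Def Bf Cf; ring

lemma hasFDerivAt_J101Def (p : EuclideanSpace ℝ (Fin 2)) (l : Par) :
    HasFDerivAt (fun q => J101Def q l)
      ((3 * p 0 ^ 2 + Bf l (p 1)) • (EuclideanSpace.proj 0 : EuclideanSpace ℝ (Fin 2) →L[ℝ] ℝ) +
        (Bd l (p 1) * p 0 + Cd l (p 1)) •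
          (EuclideanSpace.proj 1 : EuclideanSpace ℝ (Fin 2) →L[ℝ] ℝ)) p := by
  have e0 : HasFDerivAt (fun q : EuclideanSpace ℝ (Fin 2) => q 0)
      (EuclideanSpace.proj 0 : EuclideanSpace ℝ (Fin 2) →L[ℝ] ℝ) p :=
    (EuclideanSpace.proj 0 : EuclideanSpace ℝ (Fin 2) →L[ℝ] ℝ).hasFDerivAt
  have e1 : HasFDerivAt (fun q : EuclideanSpace ℝ (Fin 2) => q 1)
      (EuclideanSpace.proj 1 : EuclideanSpace ℝ (Fin 2) →L[ℝ] ℝ) p :=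
    (EuclideanSpace.proj 1 : EuclideanSpace ℝ (Fin 2) →L[ℝ] ℝ).hasFDerivAt
  have hB := (hasDerivAt_Bf l (p 1)).comp_hasFDerivAt p e1
  have hC := (hasDerivAt_Cf l (p 1)).comp_hasFDerivAt p e1
  have h := ((e0.pow 3).add (hB.mul e0)).add hC
  have hfun : (fun q => J101Def q l) =
      fun q : EuclideanSpace ℝ (Fin 2) => q 0 ^ 3 + Bf l (q 1) * q 0 + Cf l (q 1) :=
    funext fun q => J101Def_eq q l
  rw [hfun]
  refine h.congr_fderiv ?_
  ext v
  simp
  ring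

lemma fderiv_J101Def_eq_zero_iff (p : EuclideanSpace ℝ (Fin 2)) (l : Par) :
    fderiv ℝ (fun q => J101Def q l) p = 0 ↔
      3 * p 0 ^ 2 + Bf l (p 1) = 0 ∧ Bd l (p 1) * p 0 + Cd l (p 1) = 0 := by
  rw [(hasFDerivAt_J101Def p l).fderiv]
  constructor
  · intro h
    have h0 := DFunLike.congr_fun h (EuclideanSpace.single 0 1)
    have h1 := DFunLike.congr_fun h (EuclideanSpace.single 1 1)
    simp at h0 h1
    exact ⟨h0, h1⟩
  · rintro ⟨h0, h1⟩
    rw [h0, h1]; simp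

/-- For small parameters every real singular point of the curve is close to the origin, so the
local discriminant is given by `Sing`. -/
lemma mem_disc_iff {ε : ℝ} (h0 : 0 < ε) (h1 : ε ≤ 1) (l : Par) :
    l ∈ J101Disc ε (ε ^ 4 / 1000) ↔ ‖l‖ < ε ^ 4 / 1000 ∧ Sing l := by
  refine and_congr_right fun hl => ⟨?_, ?_⟩
  · rintro ⟨p, -, h2, h3⟩
    rw [fderiv_J101Def_eq_zero_iff] at h3
    rw [J101Def_eq] at h2
    exact ⟨p 0, p 1, h2, h3.1, h3.2⟩
  · rintro ⟨x, y, h2, h3, h4⟩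
    have hB : Bf l y ≤ 0 := by nlinarith [sq_nonneg x]
    have hy := abs_lt_of_Bf h0 h1 hl.le hB
    refine ⟨!₂[x, y], ?_, ?_, ?_⟩
    · have hy1 : |y| ≤ 1 := by linarith
      have hδ : ε ^ 4 ≤ ε ^ 2 := pow_le_pow_of_le_one h0.le h1 (by norm_num)
      have hc : ∀ i (k : ℕ), |l i * y ^ k| ≤ ε ^ 4 / 1000 := fun i k => by
        rw [abs_mul, abs_pow]
        have h5 := (abs_coord_le l i).trans hl.le
        have h6 : |y| ^ k ≤ 1 := pow_le_one₀ (abs_nonneg y) hy1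
        nlinarith [abs_nonneg (l i), pow_nonneg (abs_nonneg y) k]
      have e4 := (abs_le.1 (hc 9 4)).1
      have e3 := (abs_le.1 (hc 7 3)).1
      have e2 := (abs_le.1 (hc 5 2)).1
      have e1 := (abs_le.1 (hc 3 1)).1
      have e0 := (abs_le.1 (hc 1 0)).1
      have e5 : 0 ≤ y ^ 4 := by positivity
      have hx : 3 * x ^ 2 ≤ 5 * (ε ^ 4 / 1000) := by
        unfold Bf at h3; linarith
      have hy2 : y ^ 2 ≤ (ε / 2) ^ 2 := by
        rw [← sq_abs]; exact pow_le_pow_left₀ (abs_nonneg y) hy.le 2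
      rw [EuclideanSpace.norm_eq]
      refine Real.sqrt_le_iff.2 ⟨h0.le, ?_⟩
      simp [Fin.sum_univ_two]
      nlinarith
    · rw [J101Def_eq]; simpa using h2
    · rw [fderiv_J101Def_eq_zero_iff]; simpa using ⟨h3, h4⟩

end J101

/-- The complement of the local discriminant of the `J₁₀¹` singularity has at least 11
connected components. -/
theorem J101_discriminant_complement_components :
    ∃ ε₀ : ℝ, 0 < ε₀ ∧ ∀ ε : ℝ, 0 < ε → ε ≤ ε₀ → ∃ δ : ℝ, 0 < δ ∧
      ∃ pts : Fin 11 → EuclideanSpace ℝ (Fin 10),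
        (∀ i, pts i ∈ ({l : EuclideanSpace ℝ (Fin 10) | ‖l‖ < δ} \ J101Disc ε δ)) ∧
        Function.Injective (fun i =>
          connectedComponentIn ({l : EuclideanSpace ℝ (Fin 10) | ‖l‖ < δ} \ J101Disc ε δ)
            (pts i)) := by
  refine ⟨1, one_pos, fun ε h0 h1 => ⟨ε ^ 4 / 1000, by positivity, ?_⟩⟩
  have hδ : 0 < ε ^ 4 / 1000 := by positivity
  choose l h9 hS hcode using J101.exists_code
  choose t ht hsmall using fun i => J101.exists_scl_small (h9 i) hδ
  have hmem : ∀ i, J101.scl (t i) (l i) ∈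
      ({l : EuclideanSpace ℝ (Fin 10) | ‖l‖ < ε ^ 4 / 1000} \ J101Disc ε (ε ^ 4 / 1000)) :=
    fun i => ⟨hsmall i, fun h =>
      hS i (((J101.mem_disc_iff h0 h1 _).1 h).2.of_scl (ht i))⟩
  refine ⟨fun i => J101.scl (t i) (l i), hmem, fun i j hij => ?_⟩
  have hS' : ∀ l ∈ ({l : EuclideanSpace ℝ (Fin 10) | ‖l‖ < ε ^ 4 / 1000} \
      J101Disc ε (ε ^ 4 / 1000)), ‖l‖ < ε ^ 4 / 1000 ∧ ¬ J101.Sing l :=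
    fun l hl => ⟨hl.1, fun h => hl.2 ((J101.mem_disc_iff h0 h1 l).2 ⟨hl.1, h⟩)⟩
  have hc : ∀ i, J101.code (J101.scl (t i) (l i)) = i := fun i =>
    (J101.code_congr fun k σ _ => J101.word_scl_iff (ht i)).trans (hcode i)
  refine Fin.ext ?_
  rw [← hc i, ← hc j]
  exact J101.code_congr fun k σ hσ =>
    ⟨J101.word_congr h0 h1 hS' (hmem i) (hmem j) hij hσ,
      J101.word_congr h0 h1 hS' (hmem j) (hmem i) hij.symm hσ⟩
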